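/- arXiv:1702.05814 — 2 statements merged into one kernel-verified Lean document; each statement's English description precedes it below -/
import Mathlib

section
/- Let k ≥ 1 and n : Fin k → ℕ with n i ≥ 1 for all i and with the n i pairwise coprime, and let M be the monoid whose elements are pairs (m, p) with p : Fin k → ℕ and m < n^p, with multiplication (m,p)(m',p') = (m + n^p·m', p + p'). Then any two elements x = (m,p) and y = (m',p') of M that have a common right multiple have a unique right least common multiple w, and the degree of w is the pointwise maximum p ∨ p'. -/
/-- The underlying set of the single-vertex `k`-graph of the standard product of
odometers: pairs `(m, p)` with `p : Fin k → ℕ` and `m < n^p := ∏ i, (n i)^(p i)`. -/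
def Odo (k : ℕ) (n : Fin k → ℕ) : Type :=
  { x : ℕ × (Fin k → ℕ) // x.1 < ∏ i, (n i) ^ (x.2 i) }

/-- Multiplication `(m,p)(m',p') = (m + n^p·m', p + p')` on `Odo k n`. -/
def odoMul {k : ℕ} (n : Fin k → ℕ) (x y : Odo k n) : Odo k n :=
  ⟨(x.val.1 + (∏ i, (n i) ^ (x.val.2 i)) * y.val.1, fun i => x.val.2 i + y.val.2 i), by
    have hx := x.property
    have hy := y.property
    have hsplit : (∏ i, (n i) ^ (x.val.2 i + y.val.2 i)) =
        (∏ i, (n i) ^ (x.val.2 i)) * ∏ i, (n i) ^ (y.val.2 i) := by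
      rw [← Finset.prod_mul_distrib]
      exact Finset.prod_congr rfl fun i _ => pow_add _ _ _
    calc x.val.1 + (∏ i, (n i) ^ (x.val.2 i)) * y.val.1
        < (∏ i, (n i) ^ (x.val.2 i)) + (∏ i, (n i) ^ (x.val.2 i)) * y.val.1 :=
          Nat.add_lt_add_right hx _
      _ = (∏ i, (n i) ^ (x.val.2 i)) * (y.val.1 + 1) := by ring
      _ ≤ (∏ i, (n i) ^ (x.val.2 i)) * ∏ i, (n i) ^ (y.val.2 i) :=
          Nat.mul_le_mul_left _ hy
      _ = ∏ i, (n i) ^ (x.val.2 i + y.val.2 i) := hsplit.symm⟩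

/-- The identity `(0, 0)` of `Odo k n`. -/
def odoOne (k : ℕ) (n : Fin k → ℕ) : Odo k n :=
  ⟨(0, fun _ => 0), by simp⟩

/-- `w` is a right multiple of `x` in `Odo k n`. -/
def OdoRightMultiple {k : ℕ} (n : Fin k → ℕ) (w x : Odo k n) : Prop :=
  ∃ r : Odo k n, w = odoMul n x r

/-- `w` is a right least common multiple of `x` and `y` in `Odo k n`. -/
def OdoIsRightLCM {k : ℕ} (n : Fin k → ℕ) (w x y : Odo k n) : Prop :=
  OdoRightMultiple n w x ∧ OdoRightMultiple n w y ∧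
    ∀ w' : Odo k n, OdoRightMultiple n w' x → OdoRightMultiple n w' y →
      OdoRightMultiple n w' w

theorem odoRM_iff {k : ℕ} (n : Fin k → ℕ) (w x : Odo k n) :
    OdoRightMultiple n w x ↔
      (∀ i, x.val.2 i ≤ w.val.2 i) ∧ w.val.1 % (∏ i, (n i) ^ (x.val.2 i)) = x.val.1 := by
  constructor
  · rintro ⟨r, rfl⟩
    refine ⟨fun i => Nat.le_add_right _ _, ?_⟩
    have hx := x.property
    change (x.val.1 + (∏ i, (n i) ^ (x.val.2 i)) * r.val.1) % _ = _
    rw [Nat.add_mul_mod_self_left, Nat.mod_eq_of_lt hx]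
  · rintro ⟨hle, hm⟩
    have hw := w.property
    have hsplit : (∏ i, (n i) ^ (w.val.2 i)) =
        (∏ i, (n i) ^ (x.val.2 i)) * ∏ i, (n i) ^ (w.val.2 i - x.val.2 i) := by
      rw [← Finset.prod_mul_distrib]
      refine Finset.prod_congr rfl fun i _ => ?_
      rw [← pow_add, Nat.add_sub_cancel' (hle i)]
    rw [hsplit] at hw
    refine ⟨⟨(w.val.1 / (∏ i, (n i) ^ (x.val.2 i)), fun i => w.val.2 i - x.val.2 i),
      Nat.div_lt_of_lt_mul hw⟩, ?_⟩
    apply Subtype.ext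
    apply Prod.ext
    · change w.val.1 = x.val.1 + (∏ i, (n i) ^ (x.val.2 i)) *
        (w.val.1 / (∏ i, (n i) ^ (x.val.2 i)))
      rw [← hm]
      exact (Nat.mod_add_div _ _).symm
    · funext i
      exact (Nat.add_sub_cancel' (hle i)).symm

theorem odoRM_antisymm {k : ℕ} (n : Fin k → ℕ) (w x : Odo k n)
    (h1 : OdoRightMultiple n w x) (h2 : OdoRightMultiple n x w) : w = x := by
  rw [odoRM_iff] at h1 h2
  have hd : w.val.2 = x.val.2 := funext fun i => le_antisymm (h2.1 i) (h1.1 i)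
  apply Subtype.ext
  apply Prod.ext _ hd
  have hw := w.property
  rw [hd] at hw
  rw [← h1.2, Nat.mod_eq_of_lt hw]

/-- If the `n i` are pairwise coprime, any two elements of `Odo k n` having a common
right multiple have a unique right least common multiple, and its degree is the
pointwise maximum of the degrees. -/
theorem odo_unique_rightLCM_of_pairwise_coprime (k : ℕ) (hk : 1 ≤ k)
    (n : Fin k → ℕ) (hn : ∀ i, 1 ≤ n i)
    (hcop : ∀ i j : Fin k, i ≠ j → Nat.gcd (n i) (n j) = 1) :
    ∀ x y : Odo k n, (∃ w, OdoRightMultiple n w x ∧ OdoRightMultiple n w y) →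
      (∃! w, OdoIsRightLCM n w x y) ∧
        ∀ w, OdoIsRightLCM n w x y →
          w.val.2 = fun i => max (x.val.2 i) (y.val.2 i) := by
  intro x y ⟨w0, h0x, h0y⟩
  have hpos : ∀ p : Fin k → ℕ, 0 < ∏ i, (n i) ^ (p i) := fun p =>
    Finset.prod_pos fun i _ => Nat.pow_pos (hn i)
  have hdvd : ∀ p q : Fin k → ℕ, (∀ i, p i ≤ q i) →
      (∏ i, (n i) ^ (p i)) ∣ ∏ i, (n i) ^ (q i) := fun p q h =>
    Finset.prod_dvd_prod_of_dvd _ _ fun i _ => pow_dvd_pow _ (h i)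
  have hlcm : (∏ i, (n i) ^ (max (x.val.2 i) (y.val.2 i))) ∣
      Nat.lcm (∏ i, (n i) ^ (x.val.2 i)) (∏ i, (n i) ^ (y.val.2 i)) := by
    apply Finset.prod_dvd_of_isRelPrime
    · intro i _ j _ hij
      exact Nat.coprime_iff_isRelPrime.1 (Nat.Coprime.pow _ _ (hcop i j hij))
    · intro i hi
      rcases max_choice (x.val.2 i) (y.val.2 i) with h | h <;> rw [h]
      · exact (Finset.dvd_prod_of_mem (fun i => n i ^ x.val.2 i) hi).trans
          (Nat.dvd_lcm_left _ _)
      · exact (Finset.dvd_prod_of_mem (fun i => n i ^ y.val.2 i) hi).trans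
          (Nat.dvd_lcm_right _ _)
  let w : Odo k n := ⟨(w0.val.1 % ∏ i, (n i) ^ (max (x.val.2 i) (y.val.2 i)),
    fun i => max (x.val.2 i) (y.val.2 i)), Nat.mod_lt _ (hpos _)⟩
  rw [odoRM_iff] at h0x h0y
  have hw : OdoIsRightLCM n w x y := by
    refine ⟨?_, ?_, ?_⟩
    · rw [odoRM_iff]
      refine ⟨fun i => le_max_left _ _, ?_⟩
      rw [← h0x.2]
      exact Nat.mod_mod_of_dvd _ (hdvd _ _ fun i => le_max_left _ _)
    · rw [odoRM_iff]
      refine ⟨fun i => le_max_right _ _, ?_⟩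
      rw [← h0y.2]
      exact Nat.mod_mod_of_dvd _ (hdvd _ _ fun i => le_max_right _ _)
    · intro w' hx hy
      rw [odoRM_iff] at hx hy ⊢
      refine ⟨fun i => max_le (hx.1 i) (hy.1 i), ?_⟩
      have e1 : w'.val.1 ≡ w0.val.1 [MOD ∏ i, (n i) ^ (x.val.2 i)] := hx.2.trans h0x.2.symm
      have e2 : w'.val.1 ≡ w0.val.1 [MOD ∏ i, (n i) ^ (y.val.2 i)] := hy.2.trans h0y.2.symm
      have e3 : w'.val.1 ≡ w0.val.1
          [MOD Nat.lcm (∏ i, (n i) ^ (x.val.2 i)) (∏ i, (n i) ^ (y.val.2 i))] := by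
        rw [Nat.modEq_iff_dvd] at e1 e2 ⊢
        rw [Int.natCast_dvd] at e1 e2 ⊢
        exact Nat.lcm_dvd e1 e2
      exact e3.of_dvd hlcm
  have huniq : ∀ w', OdoIsRightLCM n w' x y → w' = w := fun w' h =>
    odoRM_antisymm n w' w (hw.2.2 w' h.1 h.2.1) (h.2.2 w hw.1 hw.2.1)
  refine ⟨⟨w, hw, huniq⟩, fun w' h => ?_⟩
  rw [huniq w' h]
end

section
/- Let M be a monoid, n ≥ 1 a natural number, f a unit (invertible element) of M, and g : ℕ → M a family of elements such that f·g(s) = g(s+1) whenever s + 1 ≤ n − 1, and f·g(n−1) = g(0)·f. Then: (1) f^s · g(0) = g(s) for all 0 ≤ s ≤ n − 1; (2) for all l ∈ ℕ and all N ∈ ℤ, f^{(n^l)·N} · g(0)^l = g(0)^l · f^N, where integer powers of f are taken in the group of units of M. -/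
/-- Let `M` be a monoid, `n ≥ 1`, `f` a unit of `M` and `g : ℕ → M` with
`f·g(s) = g(s+1)` for `s + 1 ≤ n − 1` and `f·g(n−1) = g(0)·f`.  Then
`f^s·g(0) = g(s)` for `0 ≤ s ≤ n − 1`, and for all `l ∈ ℕ`, `N ∈ ℤ`,
`f^{(n^l)·N}·g(0)^l = g(0)^l·f^N` (integer powers taken in the group of units). -/
theorem unit_odometer_relations {M : Type*} [Monoid M] (n : ℕ) (hn : 1 ≤ n)
    (f : Mˣ) (g : ℕ → M)
    (h1 : ∀ s : ℕ, s + 1 ≤ n - 1 → (f : M) * g s = g (s + 1))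
    (h2 : (f : M) * g (n - 1) = g 0 * (f : M)) :
    (∀ s : ℕ, s ≤ n - 1 → ((f : M)) ^ s * g 0 = g s) ∧
    (∀ (l : ℕ) (N : ℤ),
      ((f ^ ((n : ℤ) ^ l * N) : Mˣ) : M) * (g 0) ^ l =
        (g 0) ^ l * ((f ^ N : Mˣ) : M)) := by
  have hA : ∀ s : ℕ, s ≤ n - 1 → ((f : M)) ^ s * g 0 = g s := by
    intro s
    induction s with
    | zero => intro _; simp
    | succ k ih =>
      intro hk
      rw [pow_succ', mul_assoc, ih (by omega), h1 k hk]
  have hB : SemiconjBy (g 0) (f : M) ((f ^ n : Mˣ) : M) := by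
    have h3 := h2
    rw [← hA (n - 1) le_rfl, ← mul_assoc, ← pow_succ', Nat.sub_add_cancel hn] at h3
    rw [SemiconjBy, Units.val_pow_eq_pow_val]
    exact h3.symm
  have hC : ∀ N : ℤ, ((f ^ ((n : ℤ) * N) : Mˣ) : M) * g 0 = g 0 * ((f ^ N : Mˣ) : M) := by
    intro N
    have h := (hB.units_zpow_right N).eq
    rw [zpow_mul, zpow_natCast]
    exact h.symm
  refine ⟨hA, ?_⟩
  intro l
  induction l with
  | zero => intro N; simp
  | succ k ih =>
    intro N
    rw [pow_succ (n : ℤ), mul_assoc, pow_succ (g 0), ← mul_assoc, ih, mul_assoc, hC, mul_assoc]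
end
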